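/- (Lemma 3.5, parts 1 and 2: monotone escape function.) Let χ ∈ C^∞([0,∞);[0,1]) satisfy χ(τ) = 1 for τ ≤ 1, χ(τ) = 0 for τ ≥ 2, and χ' ≤ 0. Let K ⊆ U be compact and let (r(t),θ(t),ρ(t),ω(t)), t ≤ 0, be a solution of the Hamiltonian system with θ(t) ∈ K, |ρ(t)| ≤ C₀, |ω(t)| ≤ C₀, r(t) ≥ c₀|t+T₀| for all t ≤ 0, and dist(θ(t), ℝ^{n-1}∖U) ≥ ε₀ > 0. For δ₀, C > 0 and T₀ < 0 define φ(t,r,θ,ρ,ω) := χ(|r−r(t)|/(5δ₀|t+T₀|)) · χ(|θ−θ(t)|/(δ₀−C|t+T₀|^{-μ})) · χ(|ρ−ρ(t)|/(δ₀−C|t+T₀|^{-1-μ})) · χ(|ω−ω(t)|/(δ₀−C|t+T₀|^{-μ})). Then there exist δ' > 0 and C > 0 such that for every δ₀ ∈ (δ'/2, δ') there is T₀ < 0 sufficiently negative for which: (i) φ is well defined and nonnegative on (−∞,0]×(1,∞)×U×ℝ×ℝ^{n-1}, with φ(t,r(t),θ(t),ρ(t),ω(t)) = 1 for all t ≤ 0;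 and (ii) the Lagrange derivative satisfies (∂_t + (∂p/∂ρ)∂_r + (∂p/∂ω)·∂_θ − (∂p/∂r)∂_ρ − (∂p/∂θ)·∂_ω)φ ≤ 0 everywhere on (−∞,0]×(1,∞)×U×ℝ×ℝ^{n-1}. -/

import Mathlib

open Real Set Filter Topology

namespace Scattering

/-- The Euclidean norm of a vector in `Fin m → ℝ`. -/
noncomputable def eNorm {m : ℕ} (v : Fin m → ℝ) : ℝ := Real.sqrt (∑ j, v j ^ 2)

/-- Partial derivative in the radial variable of a function of `(r, θ)`. -/
noncomputable def pderivR {m : ℕ} (f : ℝ → (Fin m → ℝ) → ℝ) : ℝ → (Fin m → ℝ) → ℝ :=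
  fun r θ => deriv (fun s => f s θ) r

/-- Partial derivative in the `j`-th angular variable of a function of `(r, θ)`. -/
noncomputable def pderivTheta {m : ℕ} (j : Fin m) (f : ℝ → (Fin m → ℝ) → ℝ) :
    ℝ → (Fin m → ℝ) → ℝ :=
  fun r θ => fderiv ℝ (f r) θ (Pi.single j 1)

/-- Iterated angular derivatives `∂_θ^α` for a multi-index `α` (a list of directions). -/
noncomputable def thetaDerivs {m : ℕ} (α : List (Fin m)) (f : ℝ → (Fin m → ℝ) → ℝ) :
    ℝ → (Fin m → ℝ) → ℝ :=
  α.foldr pderivTheta f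

/-- `DecayOn f ν S K` : for all `k, α` there is `C > 0` with
`|∂_r^k ∂_θ^α f(r,θ)| ≤ C r^{-ν-k}` for `r ∈ (S,∞)`, `θ ∈ K`. -/
def DecayOn {m : ℕ} (f : ℝ → (Fin m → ℝ) → ℝ) (ν S : ℝ) (K : Set (Fin m → ℝ)) : Prop :=
  ∀ (k : ℕ) (α : List (Fin m)), ∃ C > 0, ∀ r ∈ Ioi S, ∀ θ ∈ K,
    |(pderivR (m := m))^[k] (thetaDerivs α f) r θ| ≤ C * r ^ (-ν - (k : ℝ))

/-- The classical kinetic energy function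
`p(r,θ,ρ,ω) = ρ² + r⁻²Σ h^{jk} ω_j ω_k + a₀ ρ² + r⁻¹ Σ a₁^j ρ ω_j + r⁻² Σ a₂^{jk} ω_j ω_k`. -/
noncomputable def energy {m : ℕ} (hM : (Fin m → ℝ) → Matrix (Fin m) (Fin m) ℝ)
    (a0 : ℝ → (Fin m → ℝ) → ℝ) (a1 : ℝ → (Fin m → ℝ) → Fin m → ℝ)
    (a2 : ℝ → (Fin m → ℝ) → Matrix (Fin m) (Fin m) ℝ) :
    ℝ → (Fin m → ℝ) → ℝ → (Fin m → ℝ) → ℝ :=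
  fun r θ ρ ω =>
    ρ ^ 2 + (∑ j, ∑ k, hM θ j k * ω j * ω k) / r ^ 2 + a0 r θ * ρ ^ 2
      + (∑ j, a1 r θ j * ρ * ω j) / r + (∑ j, ∑ k, a2 r θ j k * ω j * ω k) / r ^ 2

section PhaseDerivs

variable {m : ℕ} (p : ℝ → (Fin m → ℝ) → ℝ → (Fin m → ℝ) → ℝ)

/-- `∂p/∂r`. -/
noncomputable def pdR (r : ℝ) (θ : Fin m → ℝ) (ρ : ℝ) (ω : Fin m → ℝ) : ℝ :=
  deriv (fun s => p s θ ρ ω) r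

/-- `∂p/∂θ_j`. -/
noncomputable def pdTheta (j : Fin m) (r : ℝ) (θ : Fin m → ℝ) (ρ : ℝ) (ω : Fin m → ℝ) : ℝ :=
  fderiv ℝ (fun θ' => p r θ' ρ ω) θ (Pi.single j 1)

/-- `∂p/∂ρ`. -/
noncomputable def pdRho (r : ℝ) (θ : Fin m → ℝ) (ρ : ℝ) (ω : Fin m → ℝ) : ℝ :=
  deriv (fun s => p r θ s ω) ρ

/-- `∂p/∂ω_j`. -/
noncomputable def pdOmega (j : Fin m) (r : ℝ) (θ : Fin m → ℝ) (ρ : ℝ) (ω : Fin m → ℝ) : ℝ :=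
  fderiv ℝ (fun ω' => p r θ ρ ω') ω (Pi.single j 1)

/-- `(r,θ,ρ,ω)` solves the Hamiltonian system
`ṙ = ∂p/∂ρ, θ̇ = ∂p/∂ω, ρ̇ = -∂p/∂r, ω̇ = -∂p/∂θ` on the set `I` of times. -/
def IsHamSolOn (r : ℝ → ℝ) (θ : ℝ → Fin m → ℝ) (ρ : ℝ → ℝ) (ω : ℝ → Fin m → ℝ)
    (I : Set ℝ) : Prop :=
  ∀ t ∈ I,
    HasDerivAt r (pdRho p (r t) (θ t) (ρ t) (ω t)) t ∧
    (∀ j, HasDerivAt (fun s => θ s j) (pdOmega p j (r t) (θ t) (ρ t) (ω t)) t) ∧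
    HasDerivAt ρ (-pdR p (r t) (θ t) (ρ t) (ω t)) t ∧
    (∀ j, HasDerivAt (fun s => ω s j) (-pdTheta p j (r t) (θ t) (ρ t) (ω t)) t)

/-- The interaction-picture (time-dependent) Hamiltonian `K(t,R,θ,ρ,ω) = ρ² - p(R+2tρ,θ,ρ,ω)`. -/
noncomputable def Kint (t R : ℝ) (θ : Fin m → ℝ) (ρ : ℝ) (ω : Fin m → ℝ) : ℝ :=
  ρ ^ 2 - p (R + 2 * t * ρ) θ ρ ω

/-- `∂K/∂R`. -/
noncomputable def KdR (t R : ℝ) (θ : Fin m → ℝ) (ρ : ℝ) (ω : Fin m → ℝ) : ℝ :=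
  deriv (fun x => Kint p t x θ ρ ω) R

/-- `∂K/∂θ_j`. -/
noncomputable def KdTheta (j : Fin m) (t R : ℝ) (θ : Fin m → ℝ) (ρ : ℝ) (ω : Fin m → ℝ) : ℝ :=
  fderiv ℝ (fun θ' => Kint p t R θ' ρ ω) θ (Pi.single j 1)

/-- `∂K/∂ρ`. -/
noncomputable def KdRho (t R : ℝ) (θ : Fin m → ℝ) (ρ : ℝ) (ω : Fin m → ℝ) : ℝ :=
  deriv (fun x => Kint p t R θ x ω) ρ

/-- `∂K/∂ω_j`. -/
noncomputable def KdOmega (j : Fin m) (t R : ℝ) (θ : Fin m → ℝ) (ρ : ℝ) (ω : Fin m → ℝ) : ℝ :=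
  fderiv ℝ (fun ω' => Kint p t R θ ρ ω') ω (Pi.single j 1)

end PhaseDerivs

/-- The phase space `ℝ × ℝ^m × ℝ × ℝ^m` with coordinates `(R, θ, ρ, ω)`. -/
abbrev Phase (m : ℕ) : Type := ℝ × (Fin m → ℝ) × ℝ × (Fin m → ℝ)

/-- A curve `f = (R,θ,ρ,ω)` solves the interaction-picture Hamiltonian system
`Ṙ = ∂K/∂ρ, θ̇ = ∂K/∂ω, ρ̇ = -∂K/∂R, ω̇ = -∂K/∂θ` on the set `I` of times. -/
def IsIntSolOn {m : ℕ} (p : ℝ → (Fin m → ℝ) → ℝ → (Fin m → ℝ) → ℝ)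
    (f : ℝ → Phase m) (I : Set ℝ) : Prop :=
  ∀ t ∈ I,
    HasDerivAt (fun s => (f s).1) (KdRho p t (f t).1 (f t).2.1 (f t).2.2.1 (f t).2.2.2) t ∧
    (∀ j, HasDerivAt (fun s => (f s).2.1 j)
      (KdOmega p j t (f t).1 (f t).2.1 (f t).2.2.1 (f t).2.2.2) t) ∧
    HasDerivAt (fun s => (f s).2.2.1)
      (-(KdR p t (f t).1 (f t).2.1 (f t).2.2.1 (f t).2.2.2)) t ∧
    (∀ j, HasDerivAt (fun s => (f s).2.2.2 j)
      (-(KdTheta p j t (f t).1 (f t).2.1 (f t).2.2.1 (f t).2.2.2)) t)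

/-- The data of a scattering metric of short-range type on the end `(1,∞) × U`:
the boundary metric `h` (smooth, symmetric, positive definite) and the coefficients
`a₀, a₁, a₂` of the kinetic energy, smooth on `(1,∞) × U` with the short-range decay
`|∂_r^k ∂_θ^α a₀| ≤ C r^{-1-μ-k}`, `|∂_r^k ∂_θ^α a₁| ≤ C r^{-μ-k}`,
`|∂_r^k ∂_θ^α a₂| ≤ C r^{-μ-k}` on `(1,∞) × K` for every compact `K ⊆ U`. -/
structure Coeffs (m : ℕ) (μ : ℝ) (U : Set (Fin m → ℝ)) where
  hM : (Fin m → ℝ) → Matrix (Fin m) (Fin m) ℝ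
  a0 : ℝ → (Fin m → ℝ) → ℝ
  a1 : ℝ → (Fin m → ℝ) → Fin m → ℝ
  a2 : ℝ → (Fin m → ℝ) → Matrix (Fin m) (Fin m) ℝ
  hM_smooth : ∀ j k, ContDiffOn ℝ (⊤ : ℕ∞) (fun θ => hM θ j k) U
  hM_symm : ∀ θ ∈ U, (hM θ).IsSymm
  hM_posdef : ∀ θ ∈ U, (hM θ).PosDef
  a0_smooth : ContDiffOn ℝ (⊤ : ℕ∞) (fun z : ℝ × (Fin m → ℝ) => a0 z.1 z.2) (Ioi (1:ℝ) ×ˢ U)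
  a1_smooth : ∀ j, ContDiffOn ℝ (⊤ : ℕ∞) (fun z : ℝ × (Fin m → ℝ) => a1 z.1 z.2 j) (Ioi (1:ℝ) ×ˢ U)
  a2_smooth : ∀ j k, ContDiffOn ℝ (⊤ : ℕ∞) (fun z : ℝ × (Fin m → ℝ) => a2 z.1 z.2 j k) (Ioi (1:ℝ) ×ˢ U)
  a2_symm : ∀ r θ j k, a2 r θ j k = a2 r θ k j
  a0_decay : ∀ K : Set (Fin m → ℝ), IsCompact K → K ⊆ U → DecayOn a0 (1 + μ) 1 K
  a1_decay : ∀ K : Set (Fin m → ℝ), IsCompact K → K ⊆ U →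
    ∀ j, DecayOn (fun r θ => a1 r θ j) μ 1 K
  a2_decay : ∀ K : Set (Fin m → ℝ), IsCompact K → K ⊆ U →
    ∀ j k, DecayOn (fun r θ => a2 r θ j k) μ 1 K

/-- The kinetic energy function associated to the data `c`. -/
noncomputable def Coeffs.p {m : ℕ} {μ : ℝ} {U : Set (Fin m → ℝ)} (c : Coeffs m μ U) :
    ℝ → (Fin m → ℝ) → ℝ → (Fin m → ℝ) → ℝ :=
  energy c.hM c.a0 c.a1 c.a2


/-- The escape function
`φ(t,r,θ,ρ,ω) = χ(|r-r(t)|/(5δ₀|t+T₀|)) χ(|θ-θ(t)|/(δ₀-C|t+T₀|^{-μ}))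
χ(|ρ-ρ(t)|/(δ₀-C|t+T₀|^{-1-μ})) χ(|ω-ω(t)|/(δ₀-C|t+T₀|^{-μ}))` of Lemma 3.5. -/
noncomputable def escapeFn {m : ℕ} (μ : ℝ) (χ : ℝ → ℝ) (δ₀ C T₀ : ℝ)
    (rS : ℝ → ℝ) (θS : ℝ → Fin m → ℝ) (ρS : ℝ → ℝ) (ωS : ℝ → Fin m → ℝ)
    (t r : ℝ) (θ : Fin m → ℝ) (ρ : ℝ) (ω : Fin m → ℝ) : ℝ :=
  χ (|r - rS t| / (5 * δ₀ * |t + T₀|)) *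
    χ (eNorm (θ - θS t) / (δ₀ - C * |t + T₀| ^ (-μ))) *
    χ (|ρ - ρS t| / (δ₀ - C * |t + T₀| ^ (-(1:ℝ) - μ))) *
    χ (eNorm (ω - ωS t) / (δ₀ - C * |t + T₀| ^ (-μ)))

/-!
The escape function is a product of four cutoffs which localize to a box moving with the
trajectory. Its Lagrange derivative at `z` is its derivative along the Hamiltonian vector field
`H_p` relative to the moving box, and it is nonpositive as soon as, in each of the four
components, the relative velocity `H_p(z) - H_p(γ(t))` is at most the speed at which the box
shrinks. This is only needed on the support: where the escape function vanishes it is minimal, so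
its derivative vanishes too.

The energy is `ρ²` plus a sum of symbols of order `-(1+μ)` in `(r, θ)` times quadratic forms in
`(ρ, ω)`. Writing `s = |t + T₀|`, on the support `r` is at least a multiple of `s` and `(ρ, ω)` is
bounded, so the relative velocity is `O(s^{-1-μ})` in `θ` and `ω` and `O(s^{-2-μ})` in `ρ`. These
are the rates at which the widths `δ₀ - C s^{-μ}` and `δ₀ - C s^{-1-μ}` shrink, once `C` is large.
In `r` the relative velocity is at most `4δ₀ + O(s^{-1-μ})`, which is below the speed `5δ₀` of the
radial width when `T₀` is sufficiently negative.
-/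

open Asymptotics Metric

/-! ### Cutoffs of a moving ball -/

/-- A cutoff equal to `1` on `(-∞, 1]`, vanishing on `[2, ∞)` and decreasing in between: the
properties of `χ` on which the monotonicity of the escape function rests. -/
structure IsCutoff (χ : ℝ → ℝ) : Prop where
  differentiable : Differentiable ℝ χ
  antitone : Antitone χ
  eq_one : ∀ τ ≤ 1, χ τ = 1
  eq_zero : ∀ τ ≥ 2, χ τ = 0

namespace IsCutoff

variable {χ : ℝ → ℝ}

lemma of_deriv_nonpos (hd : Differentiable ℝ χ) (h1 : ∀ τ ≤ 1, χ τ = 1) (h0 : ∀ τ ≥ 2, χ τ = 0)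
    (hmono : ∀ τ ≥ 0, deriv χ τ ≤ 0) : IsCutoff χ where
  differentiable := hd
  antitone := by
    refine antitone_of_deriv_nonpos hd fun τ => ?_
    rcases le_or_gt 0 τ with hτ | hτ
    · exact hmono τ hτ
    · have hlocal : χ =ᶠ[𝓝 τ] fun _ => 1 := by
        filter_upwards [Iio_mem_nhds hτ] with s hs using h1 s (hs.le.trans zero_le_one)
      simp [hlocal.deriv_eq]
  eq_one := h1
  eq_zero := h0

lemma nonneg (hχ : IsCutoff χ) (τ : ℝ) : 0 ≤ χ τ :=
  (hχ.eq_zero _ (le_max_right τ 2)).symm.trans_le (hχ.antitone (le_max_left τ 2))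

lemma lt_two_mul_of_ne_zero (hχ : IsCutoff χ) {a g : ℝ} (hg : 0 < g) (h : χ (a / g) ≠ 0) :
    a < 2 * g := by
  by_contra! hle
  exact h (hχ.eq_zero _ ((le_div_iff₀ hg).2 hle))

variable {X E : Type*} [NormedAddCommGroup E]

lemma eventuallyEq_one [TopologicalSpace X] (hχ : IsCutoff χ) {v : X → E} {g : X → ℝ} {x : X}
    (hv : ContinuousAt v x) (hg : ContinuousAt g x) (hpos : 0 < g x) (hlt : ‖v x‖ < g x) :
    (fun y => χ (‖v y‖ / g y)) =ᶠ[𝓝 x] fun _ => 1 := by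
  filter_upwards [hv.norm.eventually_lt hg hlt, hg.eventually (lt_mem_nhds hpos)] with y hlt hpos
  exact hχ.eq_one _ ((div_le_one hpos).2 hlt.le)

variable [NormedAddCommGroup X] [NormedSpace ℝ X] [InnerProductSpace ℝ E]

lemma differentiableAt_norm_div (hχ : IsCutoff χ) {v : X → E} {g : X → ℝ} {x : X}
    (hv : DifferentiableAt ℝ v x) (hg : DifferentiableAt ℝ g x) (hpos : 0 < g x) :
    DifferentiableAt ℝ (fun y => χ (‖v y‖ / g y)) x := by
  rcases lt_or_ge ‖v x‖ (g x) with hlt | hge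
  · exact (differentiableAt_const 1).congr_of_eventuallyEq
      (hχ.eventuallyEq_one hv.continuousAt hg.continuousAt hpos hlt)
  · have hv0 : v x ≠ 0 := norm_pos_iff.1 (hpos.trans_le hge)
    simp only [div_eq_mul_inv]
    exact hχ.differentiable.differentiableAt.comp x ((hv.norm ℝ hv0).mul (hg.fun_inv hpos.ne'))

end IsCutoff

lemma exists_hasDerivAt_norm_abs_le {E : Type*} [NormedAddCommGroup E] [InnerProductSpace ℝ E]
    {v : ℝ → E} {v' : E} {t : ℝ} (hv : HasDerivAt v v' t) (h0 : v t ≠ 0) :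
    ∃ n', HasDerivAt (fun s => ‖v s‖) n' t ∧ |n'| ≤ ‖v'‖ := by
  have hnorm : DifferentiableAt ℝ (‖·‖) (v t) := (contDiffAt_norm ℝ h0).differentiableAt one_ne_zero
  refine ⟨_, hnorm.hasFDerivAt.comp_hasDerivAt t hv, ?_⟩
  have hlip : ‖fderiv ℝ (fun x : E => ‖x‖) (v t)‖ ≤ 1 :=
    norm_fderiv_le_of_lipschitz (C := 1) ℝ lipschitzWith_one_norm
  exact ((fderiv ℝ (fun x : E => ‖x‖) (v t)).le_of_opNorm_le hlip v').trans_eq (one_mul _)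

/-- A point leaving the centre no faster than the ball shrinks can only move outwards relative to
the ball, as long as it lies outside the ball; inside, the cutoff is locally constant. -/
lemma IsCutoff.exists_hasDerivAt_norm_div_nonpos {χ : ℝ → ℝ} (hχ : IsCutoff χ) {E : Type*}
    [NormedAddCommGroup E] [InnerProductSpace ℝ E] {v : ℝ → E} {v' : E} {g : ℝ → ℝ} {g' t : ℝ}
    (hv : HasDerivAt v v' t) (hg : HasDerivAt g g' t) (hpos : 0 < g t) (hle : ‖v'‖ ≤ -g') :
    ∃ d ≤ 0, HasDerivAt (fun s => χ (‖v s‖ / g s)) d t := by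
  rcases lt_or_ge ‖v t‖ (g t) with hlt | hge
  · exact ⟨0, le_rfl, (hasDerivAt_const t 1).congr_of_eventuallyEq
      (hχ.eventuallyEq_one hv.continuousAt hg.continuousAt hpos hlt)⟩
  obtain ⟨n', hn, hn'⟩ := exists_hasDerivAt_norm_abs_le hv (norm_pos_iff.1 (hpos.trans_le hge))
  have hratio : 0 ≤ (n' * g t - ‖v t‖ * g') / g t ^ 2 := by
    have hn_lower : g' ≤ n' := by linarith [neg_le_of_abs_le hn']
    have hg'_nonpos : g' ≤ 0 := by linarith [norm_nonneg v']
    have hcenter : g' * g t ≤ n' * g t := by gcongr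
    have hshrink : ‖v t‖ * g' ≤ g t * g' := mul_le_mul_of_nonpos_right hge hg'_nonpos
    exact div_nonneg (by linarith) (sq_nonneg _)
  exact ⟨_, mul_nonpos_of_nonpos_of_nonneg hχ.antitone.deriv_nonpos hratio,
    hχ.differentiable.differentiableAt.hasDerivAt.comp t (hn.fun_div hg hpos.ne')⟩

lemma exists_hasDerivAt_mul_nonpos {f g : ℝ → ℝ} {t : ℝ} (hf : ∃ d ≤ 0, HasDerivAt f d t)
    (hg : ∃ d ≤ 0, HasDerivAt g d t) (hf0 : 0 ≤ f t) (hg0 : 0 ≤ g t) :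
    ∃ d ≤ 0, HasDerivAt (fun s => f s * g s) d t := by
  obtain ⟨f', hf', hf⟩ := hf
  obtain ⟨g', hg', hg⟩ := hg
  exact ⟨_, add_nonpos (mul_nonpos_of_nonpos_of_nonneg hf' hg0)
    (mul_nonpos_of_nonneg_of_nonpos hf0 hg'), hf.fun_mul hg⟩

/-! ### The Euclidean norm -/

lemma eNorm_eq_norm_toLp {m : ℕ} (v : Fin m → ℝ) : eNorm v = ‖WithLp.toLp 2 v‖ := by
  simp [eNorm, EuclideanSpace.norm_eq]

lemma norm_le_eNorm {m : ℕ} (v : Fin m → ℝ) : ‖v‖ ≤ eNorm v := by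
  rw [eNorm_eq_norm_toLp, pi_norm_le_iff_of_nonneg (norm_nonneg _)]
  exact fun j => PiLp.norm_apply_le (WithLp.toLp 2 v) j

/-! ### The Lagrange derivative -/

section Lagrange

variable {m : ℕ} (p : ℝ → (Fin m → ℝ) → ℝ → (Fin m → ℝ) → ℝ)

/-- The Hamiltonian vector field `H_p = (∂p/∂ρ, ∂p/∂ω, -∂p/∂r, -∂p/∂θ)`. -/
noncomputable def hamField (z : Phase m) : Phase m :=
  (pdRho p z.1 z.2.1 z.2.2.1 z.2.2.2, fun j => pdOmega p j z.1 z.2.1 z.2.2.1 z.2.2.2,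
    -pdR p z.1 z.2.1 z.2.2.1 z.2.2.2, fun j => -pdTheta p j z.1 z.2.1 z.2.2.1 z.2.2.2)

/-- The Lagrange derivative `(∂_t + H_p)F` of a time-dependent function `F` on phase space, as a
combination of partial derivatives. -/
noncomputable def lagrangeDeriv (F : ℝ → ℝ → (Fin m → ℝ) → ℝ → (Fin m → ℝ) → ℝ)
    (t r : ℝ) (θ : Fin m → ℝ) (ρ : ℝ) (ω : Fin m → ℝ) : ℝ :=
  deriv (fun s => F s r θ ρ ω) t
    + pdRho p r θ ρ ω * deriv (fun x => F t x θ ρ ω) r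
    + (∑ j, pdOmega p j r θ ρ ω * fderiv ℝ (fun y => F t r y ρ ω) θ (Pi.single j 1))
    - pdR p r θ ρ ω * deriv (fun x => F t r θ x ω) ρ
    - (∑ j, pdTheta p j r θ ρ ω * fderiv ℝ (fun y => F t r θ ρ y) ω (Pi.single j 1))

lemma sum_mul_apply_single (L : (Fin m → ℝ) →L[ℝ] ℝ) (v : Fin m → ℝ) :
    ∑ j, v j * L (Pi.single j 1) = L v := by
  conv_rhs => rw [pi_eq_sum_univ' v]
  simp [Pi.single, map_sum]

lemma lagrangeDeriv_eq_lineDeriv {F : ℝ → ℝ → (Fin m → ℝ) → ℝ → (Fin m → ℝ) → ℝ} {t : ℝ}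
    {z : Phase m}
    (hF : DifferentiableAt ℝ
      (fun q : ℝ × Phase m => F q.1 q.2.1 q.2.2.1 q.2.2.2.1 q.2.2.2.2) (t, z)) :
    lagrangeDeriv p F t z.1 z.2.1 z.2.2.1 z.2.2.2 =
      lineDeriv ℝ (fun q : ℝ × Phase m => F q.1 q.2.1 q.2.2.1 q.2.2.2.1 q.2.2.2.2) (t, z)
        (1, hamField p z) := by
  obtain ⟨r, θ, ρ, ω⟩ := z
  rw [hF.lineDeriv_eq_fderiv]
  set G := fun q : ℝ × Phase m => F q.1 q.2.1 q.2.2.1 q.2.2.2.1 q.2.2.2.2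
  set L := fderiv ℝ G (t, r, θ, ρ, ω)
  have hL : HasFDerivAt G L (t, r, θ, ρ, ω) := hF.hasFDerivAt
  have ht : deriv (fun s => F s r θ ρ ω) t = L (1, 0) :=
    (hL.comp_hasDerivAt t (f := fun s => (s, r, θ, ρ, ω))
      ((hasDerivAt_id t).prodMk (hasDerivAt_const t _))).deriv
  have hr : deriv (fun x => F t x θ ρ ω) r = L (0, 1, 0) :=
    (hL.comp_hasDerivAt r (f := fun x => (t, x, θ, ρ, ω)) ((hasDerivAt_const r _).prodMk
      ((hasDerivAt_id r).prodMk (hasDerivAt_const r _)))).deriv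
  have hρ : deriv (fun x => F t r θ x ω) ρ = L (0, 0, 0, 1, 0) :=
    (hL.comp_hasDerivAt ρ (f := fun x => (t, r, θ, x, ω)) ((hasDerivAt_const ρ _).prodMk
      ((hasDerivAt_const ρ _).prodMk ((hasDerivAt_const ρ _).prodMk
        ((hasDerivAt_id ρ).prodMk (hasDerivAt_const ρ _)))))).deriv
  have hθ (v : Fin m → ℝ) : fderiv ℝ (fun y => F t r y ρ ω) θ v = L (0, 0, v, 0, 0) :=
    DFunLike.congr_fun (hL.comp θ (f := fun y => (t, r, y, ρ, ω)) ((hasFDerivAt_const _ θ).prodMk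
      ((hasFDerivAt_const _ θ).prodMk ((hasFDerivAt_id θ).prodMk
        (hasFDerivAt_const _ θ))))).fderiv v
  have hω (v : Fin m → ℝ) : fderiv ℝ (fun y => F t r θ ρ y) ω v = L (0, 0, 0, 0, v) :=
    DFunLike.congr_fun (hL.comp ω (f := fun y => (t, r, θ, ρ, y)) ((hasFDerivAt_const _ ω).prodMk
      ((hasFDerivAt_const _ ω).prodMk ((hasFDerivAt_const _ ω).prodMk
        ((hasFDerivAt_const _ ω).prodMk (hasFDerivAt_id ω)))))).fderiv v
  have hdecomp : ((1, hamField p (r, θ, ρ, ω)) : ℝ × Phase m) =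
      (1, 0) + pdRho p r θ ρ ω • (0, 1, 0) + (0, 0, fun j => pdOmega p j r θ ρ ω, 0, 0)
        - pdR p r θ ρ ω • (0, 0, 0, 1, 0) - (0, 0, 0, 0, fun j => pdTheta p j r θ ρ ω) := by
    ext <;> simp [hamField]
  rw [hdecomp, lagrangeDeriv, sum_mul_apply_single, sum_mul_apply_single, ht, hr, hρ, hθ, hω]
  simp only [map_add, map_sub, map_smul, smul_eq_mul]

end Lagrange

/-! ### Cutoffs to boxes in phase space -/

section BoxCutoff

variable {m : ℕ}

/-- The sizes of the four components of a point of phase space, to be compared with the four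
widths of a box in the product order. -/
noncomputable def compNorm (z : Phase m) : ℝ × ℝ × ℝ × ℝ :=
  (|z.1|, eNorm z.2.1, |z.2.2.1|, eNorm z.2.2.2)

/-- The cutoff to the box of widths `w` about the origin of phase space. The escape function of a
trajectory `γ` is `boxCutoff χ (w t) (z - γ t)` for suitable widths `w t`. -/
noncomputable def boxCutoff (χ : ℝ → ℝ) (w : ℝ × ℝ × ℝ × ℝ) (z : Phase m) : ℝ :=
  χ (|z.1| / w.1) * χ (eNorm z.2.1 / w.2.1) * χ (|z.2.2.1| / w.2.2.1) * χ (eNorm z.2.2.2 / w.2.2.2)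

/-- Positivity of all four widths of a box. This is stronger than `0 < w`, which in the product
order only says `0 ≤ w` and `w ≠ 0`. -/
def WidthsPos (w : ℝ × ℝ × ℝ × ℝ) : Prop :=
  0 < w.1 ∧ 0 < w.2.1 ∧ 0 < w.2.2.1 ∧ 0 < w.2.2.2

variable {χ : ℝ → ℝ} (hχ : IsCutoff χ)

include hχ

lemma boxCutoff_nonneg (w : ℝ × ℝ × ℝ × ℝ) (z : Phase m) : 0 ≤ boxCutoff χ w z :=
  mul_nonneg (mul_nonneg (mul_nonneg (hχ.nonneg _) (hχ.nonneg _)) (hχ.nonneg _)) (hχ.nonneg _)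

lemma boxCutoff_zero (w : ℝ × ℝ × ℝ × ℝ) : boxCutoff χ w (0 : Phase m) = 1 := by
  simp [boxCutoff, eNorm, hχ.eq_one 0 zero_le_one]

lemma compNorm_le_of_boxCutoff_ne_zero {w : ℝ × ℝ × ℝ × ℝ} (hw : WidthsPos w) {z : Phase m}
    (h : boxCutoff χ w z ≠ 0) : compNorm z ≤ (2 : ℝ) • w := by
  obtain ⟨hw₁, hw₂, hw₃, hw₄⟩ := hw
  simp only [boxCutoff, mul_ne_zero_iff] at h
  obtain ⟨⟨⟨hr, hθ⟩, hρ⟩, hω⟩ := h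
  exact ⟨(hχ.lt_two_mul_of_ne_zero hw₁ hr).le, (hχ.lt_two_mul_of_ne_zero hw₂ hθ).le,
    (hχ.lt_two_mul_of_ne_zero hw₃ hρ).le, (hχ.lt_two_mul_of_ne_zero hw₄ hω).le⟩

lemma differentiableAt_boxCutoff {X : Type*} [NormedAddCommGroup X] [NormedSpace ℝ X]
    {w : X → ℝ × ℝ × ℝ × ℝ} {v : X → Phase m} {x : X} (hw : DifferentiableAt ℝ w x)
    (hv : DifferentiableAt ℝ v x) (hpos : WidthsPos (w x)) :
    DifferentiableAt ℝ (fun y => boxCutoff χ (w y) (v y)) x := by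
  obtain ⟨hr, hθ, hρ, hω⟩ := hpos
  have differentiableAt_toLp {u : X → Fin m → ℝ} (hu : DifferentiableAt ℝ u x) :
      DifferentiableAt ℝ (fun y => WithLp.toLp 2 (u y)) x :=
    (PiLp.hasFDerivAt_toLp 2 (u x)).differentiableAt.comp x hu
  simp only [boxCutoff, eNorm_eq_norm_toLp, ← Real.norm_eq_abs]
  exact (((hχ.differentiableAt_norm_div hv.fst hw.fst hr).mul
    (hχ.differentiableAt_norm_div (differentiableAt_toLp hv.snd.fst) hw.snd.fst hθ)).mul
    (hχ.differentiableAt_norm_div hv.snd.snd.fst hw.snd.snd.fst hρ)).mul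
    (hχ.differentiableAt_norm_div (differentiableAt_toLp hv.snd.snd.snd) hw.snd.snd.snd hω)

lemma deriv_boxCutoff_nonpos {w : ℝ → ℝ × ℝ × ℝ × ℝ} {w' : ℝ × ℝ × ℝ × ℝ} {v : ℝ → Phase m}
    {v' : Phase m} {t : ℝ} (hw : HasDerivAt w w' t) (hv : HasDerivAt v v' t)
    (hpos : WidthsPos (w t)) (hle : compNorm v' ≤ -w') :
    deriv (fun s => boxCutoff χ (w s) (v s)) t ≤ 0 := by
  obtain ⟨hpos_r, hpos_θ, hpos_ρ, hpos_ω⟩ := hpos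
  obtain ⟨hle_r, hle_θ, hle_ρ, hle_ω⟩ := hle
  have hv_snd := hasFDerivAt_snd.comp_hasDerivAt t hv
  have hv_tail := hasFDerivAt_snd.comp_hasDerivAt t hv_snd
  have hw_snd := hasFDerivAt_snd.comp_hasDerivAt t hw
  have hw_tail := hasFDerivAt_snd.comp_hasDerivAt t hw_snd
  have hr := hχ.exists_hasDerivAt_norm_div_nonpos (hasFDerivAt_fst.comp_hasDerivAt t hv)
    (hasFDerivAt_fst.comp_hasDerivAt t hw) hpos_r hle_r
  have hθ := hχ.exists_hasDerivAt_norm_div_nonpos ((PiLp.hasFDerivAt_toLp 2 _).comp_hasDerivAt t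
    (hasFDerivAt_fst.comp_hasDerivAt t hv_snd)) (hasFDerivAt_fst.comp_hasDerivAt t hw_snd)
    hpos_θ ((eNorm_eq_norm_toLp _).symm.trans_le hle_θ)
  have hρ := hχ.exists_hasDerivAt_norm_div_nonpos (hasFDerivAt_fst.comp_hasDerivAt t hv_tail)
    (hasFDerivAt_fst.comp_hasDerivAt t hw_tail) hpos_ρ hle_ρ
  have hω := hχ.exists_hasDerivAt_norm_div_nonpos ((PiLp.hasFDerivAt_toLp 2 _).comp_hasDerivAt t
    (hasFDerivAt_snd.comp_hasDerivAt t hv_tail)) (hasFDerivAt_snd.comp_hasDerivAt t hw_tail)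
    hpos_ω ((eNorm_eq_norm_toLp _).symm.trans_le hle_ω)
  have hrθ := exists_hasDerivAt_mul_nonpos hr hθ (hχ.nonneg _) (hχ.nonneg _)
  have hrθρ := exists_hasDerivAt_mul_nonpos hrθ hρ
    (mul_nonneg (hχ.nonneg _) (hχ.nonneg _)) (hχ.nonneg _)
  obtain ⟨d, hd, hderiv⟩ := exists_hasDerivAt_mul_nonpos hrθρ hω
    (mul_nonneg (mul_nonneg (hχ.nonneg _) (hχ.nonneg _)) (hχ.nonneg _)) (hχ.nonneg _)
  simp only [boxCutoff, eNorm_eq_norm_toLp, ← Real.norm_eq_abs]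
  exact hderiv.deriv.trans_le hd

end BoxCutoff

lemma lagrangeDeriv_boxCutoff_nonpos {m : ℕ} (p : ℝ → (Fin m → ℝ) → ℝ → (Fin m → ℝ) → ℝ)
    {χ : ℝ → ℝ} (hχ : IsCutoff χ) {w : ℝ → ℝ × ℝ × ℝ × ℝ} {w' : ℝ × ℝ × ℝ × ℝ}
    {γ : ℝ → Phase m} {γ' : Phase m} {t : ℝ} {z : Phase m}
    (hw : HasDerivAt w w' t) (hγ : HasDerivAt γ γ' t) (hpos : WidthsPos (w t))
    (hle : compNorm (z - γ t) ≤ (2 : ℝ) • w t → compNorm (hamField p z - γ') ≤ -w') :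
    lagrangeDeriv p (fun t r θ ρ ω => boxCutoff χ (w t) ((r, θ, ρ, ω) - γ t))
      t z.1 z.2.1 z.2.2.1 z.2.2.2 ≤ 0 := by
  set G : ℝ × Phase m → ℝ := fun q => boxCutoff χ (w q.1) (q.2 - γ q.1)
  have hG : DifferentiableAt ℝ G (t, z) := by
    have hw_fst : DifferentiableAt ℝ (fun q : ℝ × Phase m => w q.1) (t, z) :=
      hw.differentiableAt.comp (t, z) differentiableAt_fst
    have hγ_fst : DifferentiableAt ℝ (fun q : ℝ × Phase m => γ q.1) (t, z) :=
      hγ.differentiableAt.comp (t, z) differentiableAt_fst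
    exact differentiableAt_boxCutoff hχ hw_fst (differentiableAt_snd.sub hγ_fst) hpos
  rw [lagrangeDeriv_eq_lineDeriv p hG]
  change lineDeriv ℝ G (t, z) (1, hamField p z) ≤ 0
  by_cases hzero : G (t, z) = 0
  · have hmin : IsLocalMin G (t, z) :=
      .of_forall fun q => hzero.trans_le (boxCutoff_nonneg hχ _ _)
    exact (congrFun hmin.lineDeriv_eq_zero _).le
  · have hw_shift : HasDerivAt (fun s => w (t + s)) w' 0 :=
      HasDerivAt.comp_const_add t 0 (by rwa [add_zero])
    have hγ_shift : HasDerivAt (fun s => γ (t + s)) γ' 0 :=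
      HasDerivAt.comp_const_add t 0 (by rwa [add_zero])
    have hline : HasDerivAt (fun s : ℝ => z + s • hamField p z) (hamField p z) 0 := by
      simpa using ((hasDerivAt_id (0 : ℝ)).smul_const (hamField p z)).const_add z
    have hactive := hle (compNorm_le_of_boxCutoff_ne_zero hχ hpos hzero)
    simpa [lineDeriv, G] using deriv_boxCutoff_nonpos hχ hw_shift (hline.sub hγ_shift)
      (by rwa [add_zero]) hactive

/-! ### Symbols -/

section Symbol

lemma isBigO_rpow_of_le {X : Type*} {S : Set X} {w : X → ℝ} {a b : ℝ} (hw : ∀ x ∈ S, 1 ≤ w x)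
    (hab : a ≤ b) : (fun x => w x ^ a) =O[𝓟 S] fun x => w x ^ b := by
  refine isBigO_principal.2 ⟨1, fun x hx => ?_⟩
  have h0 : 0 ≤ w x := zero_le_one.trans (hw x hx)
  rw [one_mul, Real.norm_of_nonneg (rpow_nonneg h0 a), Real.norm_of_nonneg (rpow_nonneg h0 b)]
  exact rpow_le_rpow_of_exponent_le (hw x hx) hab

lemma isBigO_div_of_isBigO_rpow {X : Type*} {S : Set X} {f w : X → ℝ} {a : ℝ}
    (hw : ∀ x ∈ S, 0 < w x) (hf : f =O[𝓟 S] fun x => w x ^ a) :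
    (fun x => f x / w x) =O[𝓟 S] fun x => w x ^ (a - 1) := by
  have hdiv := hf.mul (isBigO_refl (fun x => (w x)⁻¹) (𝓟 S))
  refine hdiv.congr' .rfl (eventually_principal.2 fun x hx => ?_)
  simp only [rpow_sub_one (hw x hx).ne', div_eq_mul_inv]

variable {m : ℕ}

/-- `f(r, θ)` is a symbol of order `-ν`: `f` and `∂_θ f` are `O(r^{-ν})` and `∂_r f` is
`O(r^{-ν-1})` on `(1,∞) × K`. -/
structure IsSymbolOn (f : ℝ → (Fin m → ℝ) → ℝ) (ν : ℝ) (K : Set (Fin m → ℝ)) : Prop where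
  differentiableAt_r : ∀ r > 1, ∀ θ ∈ K, DifferentiableAt ℝ (fun s => f s θ) r
  differentiableAt_θ : ∀ r > 1, ∀ θ ∈ K, DifferentiableAt ℝ (f r) θ
  isBigO : (fun x : ℝ × (Fin m → ℝ) => f x.1 x.2) =O[𝓟 (Ioi 1 ×ˢ K)] fun x => x.1 ^ (-ν)
  isBigO_r : (fun x : ℝ × (Fin m → ℝ) => pderivR f x.1 x.2) =O[𝓟 (Ioi 1 ×ˢ K)]
    fun x => x.1 ^ (-ν - 1)
  isBigO_θ : ∀ j, (fun x : ℝ × (Fin m → ℝ) => pderivTheta j f x.1 x.2) =O[𝓟 (Ioi 1 ×ˢ K)]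
    fun x => x.1 ^ (-ν)

lemma DecayOn.isBigO {f : ℝ → (Fin m → ℝ) → ℝ} {ν S : ℝ} {K : Set (Fin m → ℝ)}
    (h : DecayOn f ν S K) (k : ℕ) (α : List (Fin m)) :
    (fun x : ℝ × (Fin m → ℝ) => pderivR^[k] (thetaDerivs α f) x.1 x.2)
      =O[𝓟 (Ioi S ×ˢ K)] fun x => x.1 ^ (-ν - (k : ℝ)) := by
  obtain ⟨C, hC, hbound⟩ := h k α
  refine isBigO_principal.2 ⟨C, fun x hx => (hbound x.1 hx.1 x.2 hx.2).trans ?_⟩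
  gcongr
  exact le_abs_self _

namespace IsSymbolOn

variable {f : ℝ → (Fin m → ℝ) → ℝ} {ν : ℝ} {K U : Set (Fin m → ℝ)}

lemma of_decayOn (hU : IsOpen U) (hKU : K ⊆ U)
    (hf : ContDiffOn ℝ 1 (fun z : ℝ × (Fin m → ℝ) => f z.1 z.2) (Ioi 1 ×ˢ U))
    (h : DecayOn f ν 1 K) : IsSymbolOn f ν K := by
  have hdiff (r : ℝ) (hr : 1 < r) (θ : Fin m → ℝ) (hθ : θ ∈ K) :
      DifferentiableAt ℝ (fun z : ℝ × (Fin m → ℝ) => f z.1 z.2) (r, θ) :=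
    (hf.differentiableOn one_ne_zero).differentiableAt
      ((isOpen_Ioi.prod hU).mem_nhds ⟨hr, hKU hθ⟩)
  exact
    { differentiableAt_r := fun r hr θ hθ => (hdiff r hr θ hθ).comp r
        (f := fun s => (s, θ)) (differentiableAt_id.prodMk (differentiableAt_const θ))
      differentiableAt_θ := fun r hr θ hθ => (hdiff r hr θ hθ).comp θ
        (f := fun y => (r, y)) ((differentiableAt_const r).prodMk differentiableAt_id)
      isBigO := by simpa [thetaDerivs] using h.isBigO 0 []
      isBigO_r := by simpa [thetaDerivs] using h.isBigO 1 []
      isBigO_θ := fun j => by simpa [thetaDerivs] using h.isBigO 0 [j] }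

lemma of_contDiffOn_angular (hU : IsOpen U) (hK : IsCompact K) (hKU : K ⊆ U)
    {g : (Fin m → ℝ) → ℝ} (hg : ContDiffOn ℝ 1 g U) : IsSymbolOn (fun _ θ => g θ) 0 K where
  differentiableAt_r := fun _ _ _ _ => differentiableAt_const _
  differentiableAt_θ := fun _ _ θ hθ =>
    (hg.differentiableOn one_ne_zero).differentiableAt (hU.mem_nhds (hKU hθ))
  isBigO := by
    obtain ⟨C, hC⟩ := hK.exists_bound_of_continuousOn (hg.continuousOn.mono hKU)
    exact isBigO_principal.2 ⟨C, fun x hx => by simpa using hC x.2 hx.2⟩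
  isBigO_r := by simpa [pderivR] using isBigO_zero _ _
  isBigO_θ := fun j => by
    have hcont : ContinuousOn (fun θ => fderiv ℝ g θ (Pi.single j 1)) K :=
      ((hg.continuousOn_fderiv_of_isOpen hU le_rfl).mono hKU).clm_apply continuousOn_const
    obtain ⟨C, hC⟩ := hK.exists_bound_of_continuousOn hcont
    exact isBigO_principal.2 ⟨C, fun x hx => by simpa [pderivTheta] using hC x.2 hx.2⟩

lemma div_radial (h : IsSymbolOn f ν K) : IsSymbolOn (fun r θ => f r θ / r) (ν + 1) K := by
  have hpos : ∀ x ∈ Ioi (1 : ℝ) ×ˢ K, 0 < x.1 := fun x hx => zero_lt_one.trans hx.1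
  have hexp : -(ν + 1) = -ν - 1 := by ring
  refine ⟨fun r hr θ hθ => (h.differentiableAt_r r hr θ hθ).fun_div differentiableAt_id
    (zero_lt_one.trans hr).ne', fun r hr θ hθ => ?_, ?_, ?_, fun j => ?_⟩
  · simpa only [div_eq_mul_inv] using (h.differentiableAt_θ r hr θ hθ).mul_const r⁻¹
  · rw [hexp]
    exact isBigO_div_of_isBigO_rpow hpos h.isBigO
  · rw [hexp]
    refine IsBigO.congr' ((isBigO_div_of_isBigO_rpow hpos h.isBigO_r).sub
      (isBigO_div_of_isBigO_rpow hpos (isBigO_div_of_isBigO_rpow hpos h.isBigO)))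
      (eventually_principal.2 fun x hx => ?_) .rfl
    have hderiv := ((h.differentiableAt_r x.1 hx.1 x.2 hx.2).hasDerivAt.fun_div
      (hasDerivAt_id x.1) (hpos x hx).ne').deriv
    have hx1 := (hpos x hx).ne'
    simp only [pderivR, id] at hderiv ⊢
    rw [hderiv]
    field_simp
  · rw [hexp]
    refine (isBigO_div_of_isBigO_rpow hpos (h.isBigO_θ j)).congr'
      (eventually_principal.2 fun x hx => ?_) .rfl
    have hderiv := ((h.differentiableAt_θ x.1 hx.1 x.2 hx.2).hasFDerivAt.mul_const x.1⁻¹).fderiv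
    simp [pderivTheta, div_eq_mul_inv, hderiv, mul_comm]

lemma mono {ν' : ℝ} (h : IsSymbolOn f ν K) (hle : ν' ≤ ν) : IsSymbolOn f ν' K := by
  have hone : ∀ x ∈ Ioi (1 : ℝ) ×ˢ K, 1 ≤ x.1 := fun x hx => le_of_lt hx.1
  exact
    { differentiableAt_r := h.differentiableAt_r
      differentiableAt_θ := h.differentiableAt_θ
      isBigO := h.isBigO.trans (isBigO_rpow_of_le hone (by linarith))
      isBigO_r := h.isBigO_r.trans (isBigO_rpow_of_le hone (by linarith))
      isBigO_θ := fun j => (h.isBigO_θ j).trans (isBigO_rpow_of_le hone (by linarith)) }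

end IsSymbolOn

end Symbol

/-! ### Short-range Hamiltonians -/

section ShortRange

variable {m : ℕ} {p : ℝ → (Fin m → ℝ) → ℝ → (Fin m → ℝ) → ℝ} {ν : ℝ}

/-- The region `(1,∞) × K × [-B,B] × {|ω| ≤ B}` of phase space, in which trajectories and the
support of the escape function live. The norm of `ω` is the sup norm. -/
def bddRegion (K : Set (Fin m → ℝ)) (B : ℝ) : Set (Phase m) :=
  Ioi 1 ×ˢ K ×ˢ closedBall 0 B ×ˢ closedBall 0 B

/-- The Hamiltonian vector field `(2ρ, 0, 0, 0)` of the free energy `ρ²`. -/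
def freeField (z : Phase m) : Phase m := (2 * z.2.2.1, 0, 0, 0)

/-- The decay of the components of the Hamiltonian vector field of a symbol of order `-ν`. -/
noncomputable def decayRates (ν s : ℝ) : ℝ × ℝ × ℝ × ℝ :=
  (s ^ (-ν), s ^ (-ν), s ^ (-ν - 1), s ^ (-ν))

/-- `p` is a perturbation of the free energy `ρ²` by a symbol of order `-ν`, as far as its
Hamiltonian vector field on `S` is concerned. For `ν > 1` this is the short-range condition. -/
def ShortRangeOn (p : ℝ → (Fin m → ℝ) → ℝ → (Fin m → ℝ) → ℝ) (ν : ℝ) (S : Set (Phase m)) : Prop :=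
  ∃ M > (0 : ℝ), ∀ z ∈ S, compNorm (hamField p z - freeField z) ≤ M • decayRates ν z.1

lemma shortRangeOn_of_isBigO {S : Set (Phase m)} (hS : ∀ z ∈ S, 0 ≤ z.1)
    (hρ : (fun z => pdRho p z.1 z.2.1 z.2.2.1 z.2.2.2 - 2 * z.2.2.1) =O[𝓟 S] fun z => z.1 ^ (-ν))
    (hω : ∀ j, (fun z => pdOmega p j z.1 z.2.1 z.2.2.1 z.2.2.2) =O[𝓟 S] fun z => z.1 ^ (-ν))
    (hr : (fun z => pdR p z.1 z.2.1 z.2.2.1 z.2.2.2) =O[𝓟 S] fun z => z.1 ^ (-ν - 1))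
    (hθ : ∀ j, (fun z => pdTheta p j z.1 z.2.1 z.2.2.1 z.2.2.2) =O[𝓟 S] fun z => z.1 ^ (-ν)) :
    ShortRangeOn p ν S := by
  have isBigO_toLp {v : Phase m → Fin m → ℝ}
      (hv : ∀ j, (fun z => v z j) =O[𝓟 S] fun z => z.1 ^ (-ν)) :
      (fun z => WithLp.toLp 2 (v z)) =O[𝓟 S] fun z => z.1 ^ (-ν) :=
    ((PiLp.continuousLinearEquiv 2 ℝ fun _ : Fin m => ℝ).symm.isBigO_comp v _).trans
      (isBigO_pi.2 hv)
  have hbounds := ((isBigO_iff_eventually.1 hρ).and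
    (isBigO_iff_eventually.1 (isBigO_toLp hω))).and
    ((isBigO_iff_eventually.1 hr).and (isBigO_iff_eventually.1
      (isBigO_toLp fun j => (hθ j).neg_left)))
  obtain ⟨M, ⟨⟨hMρ, hMω⟩, hMr, hMθ⟩, hM⟩ := (hbounds.and (eventually_gt_atTop 0)).exists
  refine ⟨M, hM, fun z hz => ?_⟩
  have norm_rpow (a : ℝ) : ‖z.1 ^ a‖ = z.1 ^ a := Real.norm_of_nonneg (rpow_nonneg (hS z hz) a)
  have h₁ := eventually_principal.1 hMρ z hz
  have h₂ := eventually_principal.1 hMω z hz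
  have h₃ := eventually_principal.1 hMr z hz
  have h₄ := eventually_principal.1 hMθ z hz
  rw [norm_rpow] at h₁ h₂ h₃ h₄
  refine ⟨h₁, ?_, ?_, ?_⟩
  · simpa [compNorm, freeField, hamField, decayRates, eNorm_eq_norm_toLp] using h₂
  · simpa [compNorm, freeField, hamField, decayRates] using h₃
  · simpa [compNorm, freeField, hamField, decayRates, eNorm_eq_norm_toLp] using h₄

lemma isBigO_mul_bddRegion {f : ℝ → (Fin m → ℝ) → ℝ} {g : ℝ × (Fin m → ℝ) → ℝ} {a B : ℝ}
    {K : Set (Fin m → ℝ)}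
    (hf : (fun x : ℝ × (Fin m → ℝ) => f x.1 x.2) =O[𝓟 (Ioi 1 ×ˢ K)] fun x => x.1 ^ a)
    (hg : Continuous g) :
    (fun z : Phase m => f z.1 z.2.1 * g z.2.2) =O[𝓟 (bddRegion K B)] fun z => z.1 ^ a := by
  have hf' : (fun z : Phase m => f z.1 z.2.1) =O[𝓟 (bddRegion K B)] fun z => z.1 ^ a :=
    hf.comp_tendsto (k := fun z : Phase m => (z.1, z.2.1))
      (tendsto_principal_principal.2 fun z hz => ⟨hz.1, hz.2.1⟩)
  obtain ⟨C, hC⟩ := ((isCompact_closedBall (0 : ℝ) B).prod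
    (isCompact_closedBall (0 : Fin m → ℝ) B)).exists_bound_of_continuousOn hg.continuousOn
  have hg' : (fun z : Phase m => g z.2.2) =O[𝓟 (bddRegion K B)] fun _ => (1 : ℝ) :=
    isBigO_principal.2 ⟨C, fun z hz => by simpa using hC z.2.2 hz.2.2⟩
  simpa using hf'.mul hg'

section SumOfSymbols

variable {ι : Type*} [Fintype ι] {f : ι → ℝ → (Fin m → ℝ) → ℝ} {q : ι → ℝ × (Fin m → ℝ) → ℝ}
  (hp : ∀ r θ ρ ω, p r θ ρ ω = ρ ^ 2 + ∑ i, f i r θ * q i (ρ, ω))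

include hp

lemma pdR_eq_sum {r : ℝ} {θ : Fin m → ℝ} (ρ : ℝ) (ω : Fin m → ℝ)
    (hf : ∀ i, DifferentiableAt ℝ (fun s => f i s θ) r) :
    pdR p r θ ρ ω = ∑ i, pderivR (f i) r θ * q i (ρ, ω) := by
  simp only [pdR, hp]
  exact ((HasDerivAt.fun_sum fun i _ => (hf i).hasDerivAt.mul_const (q i (ρ, ω))).const_add
    (ρ ^ 2)).deriv

lemma pdTheta_eq_sum (j : Fin m) {r : ℝ} {θ : Fin m → ℝ} (ρ : ℝ) (ω : Fin m → ℝ)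
    (hf : ∀ i, DifferentiableAt ℝ (f i r) θ) :
    pdTheta p j r θ ρ ω = ∑ i, pderivTheta j (f i) r θ * q i (ρ, ω) := by
  simp only [pdTheta, hp]
  rw [((HasFDerivAt.fun_sum fun i _ => (hf i).hasFDerivAt.mul_const (q i (ρ, ω))).const_add
    (ρ ^ 2)).fderiv]
  simp [pderivTheta, mul_comm]

lemma pdRho_eq_sum (r : ℝ) (θ : Fin m → ℝ) (ρ : ℝ) (ω : Fin m → ℝ)
    (hq : ∀ i, Differentiable ℝ (q i)) :
    pdRho p r θ ρ ω = 2 * ρ + ∑ i, f i r θ * fderiv ℝ (q i) (ρ, ω) (1, 0) := by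
  have hqρ (i : ι) : HasDerivAt (fun s => q i (s, ω)) (fderiv ℝ (q i) (ρ, ω) (1, 0)) ρ :=
    (hq i (ρ, ω)).hasFDerivAt.comp_hasDerivAt ρ
      ((hasDerivAt_id ρ).prodMk (hasDerivAt_const ρ ω))
  simp only [pdRho, hp]
  simpa using ((hasDerivAt_pow 2 ρ).fun_add
    (HasDerivAt.fun_sum fun i _ => (hqρ i).const_mul (f i r θ))).deriv

lemma pdOmega_eq_sum (j : Fin m) (r : ℝ) (θ : Fin m → ℝ) (ρ : ℝ) (ω : Fin m → ℝ)
    (hq : ∀ i, Differentiable ℝ (q i)) :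
    pdOmega p j r θ ρ ω = ∑ i, f i r θ * fderiv ℝ (q i) (ρ, ω) (0, Pi.single j 1) := by
  have hqω (i : ι) : HasFDerivAt (fun y => q i (ρ, y)) _ ω :=
    (hq i (ρ, ω)).hasFDerivAt.comp ω ((hasFDerivAt_const ρ ω).prodMk (hasFDerivAt_id ω))
  simp only [pdOmega, hp]
  rw [((HasFDerivAt.fun_sum fun i _ => (hqω i).const_mul (f i r θ)).const_add (ρ ^ 2)).fderiv]
  simp

/-- Differentiating `f i r θ * q i (ρ, ω)` in `r` gains a power of `r`, and the other derivatives
lose none, since `q i` is bounded with its derivatives on bounded sets. -/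
lemma shortRangeOn_of_eq_sum_symbols {K : Set (Fin m → ℝ)} (hf : ∀ i, IsSymbolOn (f i) ν K)
    (hq : ∀ i, ContDiff ℝ 1 (q i)) (B : ℝ) : ShortRangeOn p ν (bddRegion K B) := by
  have hqd (i : ι) : Differentiable ℝ (q i) := (hq i).differentiable one_ne_zero
  have hq' (i : ι) (v : ℝ × (Fin m → ℝ)) : Continuous fun y => fderiv ℝ (q i) y v :=
    ((hq i).continuous_fderiv one_ne_zero).clm_apply continuous_const
  refine shortRangeOn_of_isBigO (fun z hz => zero_le_one.trans (le_of_lt hz.1))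
    ?_ (fun j => ?_) ?_ (fun j => ?_)
  · simp only [pdRho_eq_sum hp _ _ _ _ hqd, add_sub_cancel_left]
    exact IsBigO.fun_sum fun i _ => isBigO_mul_bddRegion (hf i).isBigO (hq' i (1, 0))
  · simp only [pdOmega_eq_sum hp j _ _ _ _ hqd]
    exact IsBigO.fun_sum fun i _ => isBigO_mul_bddRegion (hf i).isBigO (hq' i (0, Pi.single j 1))
  · refine (IsBigO.fun_sum fun i _ => isBigO_mul_bddRegion (hf i).isBigO_r (hq i).continuous).congr'
      (eventually_principal.2 fun z hz => (pdR_eq_sum hp _ _ fun i => ?_).symm) .rfl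
    exact (hf i).differentiableAt_r z.1 hz.1 z.2.1 hz.2.1
  · refine (IsBigO.fun_sum fun i _ =>
      isBigO_mul_bddRegion ((hf i).isBigO_θ j) (hq i).continuous).congr'
      (eventually_principal.2 fun z hz => (pdTheta_eq_sum hp j _ _ fun i => ?_).symm) .rfl
    exact (hf i).differentiableAt_θ z.1 hz.1 z.2.1 hz.2.1

end SumOfSymbols

lemma energy_eq_sum (hM : (Fin m → ℝ) → Matrix (Fin m) (Fin m) ℝ) (a0 : ℝ → (Fin m → ℝ) → ℝ)
    (a1 : ℝ → (Fin m → ℝ) → Fin m → ℝ) (a2 : ℝ → (Fin m → ℝ) → Matrix (Fin m) (Fin m) ℝ)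
    (r : ℝ) (θ : Fin m → ℝ) (ρ : ℝ) (ω : Fin m → ℝ) :
    energy hM a0 a1 a2 r θ ρ ω = ρ ^ 2 + (∑ j, ∑ k, hM θ j k / r / r * (ω j * ω k) +
      (a0 r θ * ρ ^ 2 + (∑ j, a1 r θ j / r * (ρ * ω j) +
        ∑ j, ∑ k, a2 r θ j k / r / r * (ω j * ω k)))) := by
  have hquad (A : Matrix (Fin m) (Fin m) ℝ) : (∑ j, ∑ k, A j k * ω j * ω k) / r ^ 2 =
      ∑ j, ∑ k, A j k / r / r * (ω j * ω k) := by
    simp only [Finset.sum_div]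
    exact Finset.sum_congr rfl fun j _ => Finset.sum_congr rfl fun k _ => by ring
  have hlin : (∑ j, a1 r θ j * ρ * ω j) / r = ∑ j, a1 r θ j / r * (ρ * ω j) := by
    simp only [Finset.sum_div]
    exact Finset.sum_congr rfl fun j _ => by ring
  simp only [energy, hquad, hlin, add_assoc]

lemma Coeffs.shortRangeOn {μ : ℝ} {U : Set (Fin m → ℝ)} (c : Coeffs m μ U) (hμ : μ ≤ 1)
    (hU : IsOpen U) {K : Set (Fin m → ℝ)} (hK : IsCompact K) (hKU : K ⊆ U) (B : ℝ) :
    ShortRangeOn c.p (1 + μ) (bddRegion K B) := by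
  have hh (jk : Fin m × Fin m) :
      IsSymbolOn (fun r θ => c.hM θ jk.1 jk.2 / r / r) (1 + μ) K :=
    (IsSymbolOn.of_contDiffOn_angular hU hK hKU
      ((c.hM_smooth jk.1 jk.2).of_le (by simp))).div_radial.div_radial.mono (by linarith)
  have ha0 : IsSymbolOn c.a0 (1 + μ) K :=
    .of_decayOn hU hKU (c.a0_smooth.of_le (by simp)) (c.a0_decay K hK hKU)
  have ha1 (j : Fin m) : IsSymbolOn (fun r θ => c.a1 r θ j / r) (1 + μ) K :=
    (IsSymbolOn.of_decayOn hU hKU ((c.a1_smooth j).of_le (by simp))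
      (c.a1_decay K hK hKU j)).div_radial.mono (by linarith)
  have ha2 (jk : Fin m × Fin m) : IsSymbolOn (fun r θ => c.a2 r θ jk.1 jk.2 / r / r) (1 + μ) K :=
    (IsSymbolOn.of_decayOn hU hKU ((c.a2_smooth jk.1 jk.2).of_le (by simp))
      (c.a2_decay K hK hKU jk.1 jk.2)).div_radial.div_radial.mono (by linarith)
  refine shortRangeOn_of_eq_sum_symbols
    (ι := (Fin m × Fin m) ⊕ Unit ⊕ Fin m ⊕ (Fin m × Fin m))
    (f := Sum.elim (fun jk r θ => c.hM θ jk.1 jk.2 / r / r) (Sum.elim (fun _ : Unit => c.a0)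
      (Sum.elim (fun j r θ => c.a1 r θ j / r) fun jk r θ => c.a2 r θ jk.1 jk.2 / r / r)))
    (q := Sum.elim (fun jk v => v.2 jk.1 * v.2 jk.2) (Sum.elim (fun _ v => v.1 ^ 2)
      (Sum.elim (fun j v => v.1 * v.2 j) fun jk v => v.2 jk.1 * v.2 jk.2)))
    (fun r θ ρ ω => ?_) ?_ ?_ B
  · simp only [Coeffs.p, energy_eq_sum, Fintype.sum_sum_type, Fintype.sum_prod_type,
      Sum.elim_inl, Sum.elim_inr, Finset.univ_unique, Finset.sum_singleton]
  · rintro (jk | _ | j | jk)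
    exacts [hh jk, ha0, ha1 j, ha2 jk]
  · rintro (jk | _ | j | jk) <;> simp only [Sum.elim_inl, Sum.elim_inr] <;> fun_prop

end ShortRange

/-! ### Relative motion in a tube around a trajectory -/

section Tube

variable {m : ℕ} {p : ℝ → (Fin m → ℝ) → ℝ → (Fin m → ℝ) → ℝ} {ν : ℝ}

lemma compNorm_add_le (z z' : Phase m) : compNorm (z + z') ≤ compNorm z + compNorm z' := by
  have eNorm_add_le (v v' : Fin m → ℝ) : eNorm (v + v') ≤ eNorm v + eNorm v' := by
    simpa only [eNorm_eq_norm_toLp, WithLp.toLp_add] using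
      norm_add_le (WithLp.toLp 2 v) (WithLp.toLp 2 v')
  exact ⟨abs_add_le _ _, eNorm_add_le _ _, abs_add_le _ _, eNorm_add_le _ _⟩

lemma compNorm_neg (z : Phase m) : compNorm (-z) = compNorm z := by
  simp [compNorm, eNorm]

lemma compNorm_freeField_sub (z z' : Phase m) :
    compNorm (freeField z - freeField z') = (2 * |z.2.2.1 - z'.2.2.1|, 0, 0, 0) := by
  simp [compNorm, freeField, eNorm, ← mul_sub, abs_mul]

lemma decayRates_anti (hν : 0 ≤ ν) {a b : ℝ} (ha : 0 < a) (hab : a ≤ b) :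
    decayRates ν b ≤ decayRates ν a := by
  have h (e : ℝ) (he : e ≤ 0) : b ^ e ≤ a ^ e := rpow_le_rpow_of_nonpos ha hab he
  exact ⟨h _ (by linarith), h _ (by linarith), h _ (by linarith), h _ (by linarith)⟩

lemma decayRates_mul_le {κ s : ℝ} (hκ : 0 < κ) (hs : 0 < s) :
    decayRates ν (κ * s) ≤ (κ ^ (-ν) + κ ^ (-ν - 1)) • decayRates ν s := by
  have hle (e : ℝ) (he : κ ^ e ≤ κ ^ (-ν) + κ ^ (-ν - 1)) :
      (κ * s) ^ e ≤ (κ ^ (-ν) + κ ^ (-ν - 1)) * s ^ e := by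
    rw [mul_rpow hκ.le hs.le]
    gcongr
  have hν : κ ^ (-ν) ≤ κ ^ (-ν) + κ ^ (-ν - 1) := le_add_of_nonneg_right (by positivity)
  exact ⟨hle _ hν, hle _ hν, hle _ (le_add_of_nonneg_left (by positivity)), hle _ hν⟩

lemma ShortRangeOn.exists_compNorm_sub_freeField_le {S : Set (Phase m)} (h : ShortRangeOn p ν S)
    (hν : 0 ≤ ν) {κ : ℝ} (hκ : 0 < κ) :
    ∃ N > (0 : ℝ), ∀ s > 0, ∀ z ∈ S, κ * s ≤ z.1 →
      compNorm (hamField p z - freeField z) ≤ N • decayRates ν s := by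
  obtain ⟨M, hM, hbound⟩ := h
  refine ⟨M * (κ ^ (-ν) + κ ^ (-ν - 1)), by positivity, fun s hs z hz hzs => ?_⟩
  calc compNorm (hamField p z - freeField z) ≤ M • decayRates ν z.1 := hbound z hz
    _ ≤ M • decayRates ν (κ * s) := by gcongr; exact decayRates_anti hν (by positivity) hzs
    _ ≤ M • (κ ^ (-ν) + κ ^ (-ν - 1)) • decayRates ν s := by gcongr; exact decayRates_mul_le hκ hs
    _ = _ := smul_smul _ _ _

lemma ShortRangeOn.exists_compNorm_hamField_sub_le {S : Set (Phase m)} (h : ShortRangeOn p ν S)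
    (hν : 0 ≤ ν) {κ : ℝ} (hκ : 0 < κ) :
    ∃ N > (0 : ℝ), ∀ s > 0, ∀ z ∈ S, ∀ z' ∈ S, κ * s ≤ z.1 → κ * s ≤ z'.1 →
      compNorm (hamField p z - hamField p z') ≤
        (2 * |z.2.2.1 - z'.2.2.1|, 0, 0, 0) + N • decayRates ν s := by
  obtain ⟨N, hN, hbound⟩ := h.exists_compNorm_sub_freeField_le hν hκ
  refine ⟨N + N, by positivity, fun s hs z hz z' hz' hzs hzs' => ?_⟩
  have hsplit : hamField p z - hamField p z' = (freeField z - freeField z') +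
      ((hamField p z - freeField z) + -(hamField p z' - freeField z')) := by abel
  calc compNorm (hamField p z - hamField p z')
      ≤ compNorm (freeField z - freeField z') + (compNorm (hamField p z - freeField z) +
          compNorm (-(hamField p z' - freeField z'))) := by
        rw [hsplit]
        exact (compNorm_add_le _ _).trans (by gcongr; exact compNorm_add_le _ _)
    _ ≤ (2 * |z.2.2.1 - z'.2.2.1|, 0, 0, 0) + (N • decayRates ν s + N • decayRates ν s) := by
        rw [compNorm_freeField_sub, compNorm_neg]
        gcongr
        exacts [hbound s hs z hz hzs, hbound s hs z' hz' hzs']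
    _ = _ := by rw [add_smul]

lemma bddRegion_mono {K K' : Set (Fin m → ℝ)} {B B' : ℝ} (hK : K ⊆ K') (hB : B ≤ B') :
    bddRegion K B ⊆ bddRegion K' B' :=
  prod_mono_right (prod_mono hK
    (prod_mono (closedBall_subset_closedBall hB) (closedBall_subset_closedBall hB)))

lemma mem_bddRegion_of_compNorm_sub_le {K : Set (Fin m → ℝ)} {B a δ : ℝ} {z z' : Phase m}
    (hz' : z' ∈ bddRegion K B) (hz : 1 < z.1) (h : compNorm (z - z') ≤ (a, δ, δ, δ)) :
    z ∈ bddRegion (cthickening δ K) (B + δ) := by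
  obtain ⟨-, hθK, hρ, hω⟩ := hz'
  obtain ⟨-, hθ, hρδ, hωδ⟩ := h
  rw [mem_closedBall_zero_iff] at hρ hω
  refine ⟨hz, mem_cthickening_of_dist_le z.2.1 z'.2.1 δ K hθK ?_, ?_, ?_⟩
  · exact (dist_eq_norm _ _).trans_le ((norm_le_eNorm _).trans hθ)
  · exact mem_closedBall_zero_iff.2 ((norm_le_norm_add_norm_sub' z.2.2.1 z'.2.2.1).trans
      (add_le_add hρ hρδ))
  · exact mem_closedBall_zero_iff.2 ((norm_le_norm_add_norm_sub' z.2.2.2 z'.2.2.2).trans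
      (add_le_add hω ((norm_le_eNorm _).trans hωδ)))

/-- In a thin conical tube around a point with `c₀ s ≤ r`, the angular variable stays in a compact
subset of `U` and `r` stays comparable to `s`. -/
lemma exists_compNorm_hamField_sub_le_of_tube {U K : Set (Fin m → ℝ)} (hU : IsOpen U)
    (hp : ∀ L ⊆ U, IsCompact L → ∀ B, ShortRangeOn p ν (bddRegion L B)) (hν : 0 ≤ ν)
    (hK : IsCompact K) (hKU : K ⊆ U) {c₀ : ℝ} (hc₀ : 0 < c₀) (C₀ : ℝ) :
    ∃ δ' > 0, ∃ N > (0 : ℝ), ∀ δ₀ ≤ δ', ∀ s > 0, ∀ z z' : Phase m, 1 < z.1 →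
      z' ∈ bddRegion K C₀ → c₀ * s ≤ z'.1 → compNorm (z - z') ≤ (2 : ℝ) • (5 * δ₀ * s, δ₀, δ₀, δ₀) →
      compNorm (hamField p z - hamField p z') ≤
        (2 * |z.2.2.1 - z'.2.2.1|, 0, 0, 0) + N • decayRates ν s := by
  obtain ⟨δ, hδ, hδU⟩ := hK.exists_cthickening_subset_open hU hKU
  obtain ⟨N, hN, hbound⟩ := (hp _ hδU hK.cthickening (C₀ + δ)).exists_compNorm_hamField_sub_le hν
    (half_pos hc₀)
  refine ⟨min (δ / 2) (c₀ / 20), by positivity, N, hN,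
    fun δ₀ hδ₀ s hs z z' hz hz' hrs htube => hbound s hs z ?_ z' ?_ ?_ ?_⟩
  · have hδ₀δ : 2 * δ₀ ≤ δ := by linarith [hδ₀.trans (min_le_left _ _)]
    exact mem_bddRegion_of_compNorm_sub_le hz' hz
      (htube.trans (Prod.mk_le_mk.2 ⟨le_rfl, hδ₀δ, hδ₀δ, hδ₀δ⟩))
  · exact bddRegion_mono (self_subset_cthickening K) (by linarith) hz'
  · have hδ₀c : 20 * δ₀ * s ≤ c₀ * s := by
      gcongr
      linarith [hδ₀.trans (min_le_right _ _)]
    have hr : |z.1 - z'.1| ≤ 2 * (5 * δ₀ * s) := htube.1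
    linarith [neg_le_of_abs_le hr]
  · nlinarith [mul_pos hc₀ hs]

end Tube

/-! ### The escape function -/

section Escape

variable {m : ℕ} {p : ℝ → (Fin m → ℝ) → ℝ → (Fin m → ℝ) → ℝ} {μ δ₀ C : ℝ}

/-- The widths of the box to which the escape function localizes at the time with `|t + T₀| = s`. -/
noncomputable def escapeWidths (μ δ₀ C s : ℝ) : ℝ × ℝ × ℝ × ℝ :=
  (5 * δ₀ * s, δ₀ - C * s ^ (-μ), δ₀ - C * s ^ (-(1 : ℝ) - μ), δ₀ - C * s ^ (-μ))

lemma escapeFn_eq_boxCutoff (χ : ℝ → ℝ) (T₀ : ℝ) (rS : ℝ → ℝ) (θS : ℝ → Fin m → ℝ) (ρS : ℝ → ℝ)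
    (ωS : ℝ → Fin m → ℝ) :
    escapeFn μ χ δ₀ C T₀ rS θS ρS ωS = fun t r θ ρ ω =>
      boxCutoff χ (escapeWidths μ δ₀ C |t + T₀|) ((r, θ, ρ, ω) - (rS t, θS t, ρS t, ωS t)) :=
  rfl

lemma IsHamSolOn.hasDerivAt {rS : ℝ → ℝ} {θS : ℝ → Fin m → ℝ} {ρS : ℝ → ℝ} {ωS : ℝ → Fin m → ℝ}
    {I : Set ℝ} (h : IsHamSolOn p rS θS ρS ωS I) {t : ℝ} (ht : t ∈ I) :
    HasDerivAt (fun t => (rS t, θS t, ρS t, ωS t)) (hamField p (rS t, θS t, ρS t, ωS t)) t := by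
  obtain ⟨hr, hθ, hρ, hω⟩ := h t ht
  exact hr.prodMk ((hasDerivAt_pi.2 hθ).prodMk (hρ.prodMk (hasDerivAt_pi.2 hω)))

/-- The velocity at which the widths `escapeWidths μ δ₀ C s` grow in `s`. -/
noncomputable def escapeWidthsDeriv (μ δ₀ C s : ℝ) : ℝ × ℝ × ℝ × ℝ :=
  (5 * δ₀, C * μ * s ^ (-(1 + μ)), C * (1 + μ) * s ^ (-(1 + μ) - 1), C * μ * s ^ (-(1 + μ)))

lemma hasDerivAt_escapeWidths (μ δ₀ C : ℝ) {s : ℝ} (hs : 0 < s) :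
    HasDerivAt (escapeWidths μ δ₀ C) (escapeWidthsDeriv μ δ₀ C s) s := by
  have hpow (e : ℝ) : HasDerivAt (fun x => δ₀ - C * x ^ e) (-(C * (e * s ^ (e - 1)))) s :=
    ((hasDerivAt_rpow_const (Or.inl hs.ne')).const_mul C).const_sub δ₀
  have hμ : HasDerivAt (fun x => δ₀ - C * x ^ (-μ)) (C * μ * s ^ (-(1 + μ))) s :=
    (hpow (-μ)).congr_deriv (by rw [show -μ - 1 = -(1 + μ) by ring]; ring)
  have h1μ : HasDerivAt (fun x => δ₀ - C * x ^ (-(1 : ℝ) - μ))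
      (C * (1 + μ) * s ^ (-(1 + μ) - 1)) s :=
    (hpow (-(1 : ℝ) - μ)).congr_deriv
      (by rw [show -(1 : ℝ) - μ = -(1 + μ) by ring]; ring)
  exact ((hasDerivAt_id s).const_mul (5 * δ₀)).congr_deriv (mul_one _) |>.prodMk
    (hμ.prodMk (h1μ.prodMk hμ))

lemma hasDerivAt_escapeWidths_abs (μ δ₀ C : ℝ) {t T₀ : ℝ} (ht : t + T₀ < 0) :
    HasDerivAt (fun t => escapeWidths μ δ₀ C |t + T₀|)
      (-escapeWidthsDeriv μ δ₀ C |t + T₀|) t := by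
  have habs : HasDerivAt (fun t => |t + T₀|) (-1) t :=
    HasDerivAt.comp_add_const t T₀ (hasDerivAt_abs_neg ht)
  exact ((hasDerivAt_escapeWidths μ δ₀ C (abs_pos.2 ht.ne)).scomp t habs).congr_deriv
    (neg_one_smul ℝ _)

lemma eventually_widthsPos_escapeWidths (hμ : 0 < μ) (hδ₀ : 0 < δ₀) (C N : ℝ) :
    ∀ᶠ s in atTop, WidthsPos (escapeWidths μ δ₀ C s) ∧ N * s ^ (-(1 + μ)) ≤ δ₀ := by
  have hsmall (A : ℝ) {e : ℝ} (he : 0 < e) : ∀ᶠ s : ℝ in atTop, A * s ^ (-e) < δ₀ := by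
    have hlim := (tendsto_rpow_neg_atTop he).const_mul A
    rw [mul_zero] at hlim
    exact hlim.eventually_lt_const hδ₀
  have h1μ : 0 < 1 + μ := by positivity
  filter_upwards [eventually_gt_atTop 0, hsmall C hμ, hsmall C h1μ, hsmall N h1μ]
    with s hs hCμ hC1μ hN
  have hexp : -(1 : ℝ) - μ = -(1 + μ) := by ring
  exact ⟨⟨by simp only [escapeWidths]; positivity, sub_pos.2 hCμ, sub_pos.2 (hexp ▸ hC1μ),
    sub_pos.2 hCμ⟩, hN.le⟩

lemma escapeWidths_le (hC : 0 ≤ C) {s : ℝ} (hs : 0 ≤ s) :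
    escapeWidths μ δ₀ C s ≤ (5 * δ₀ * s, δ₀, δ₀, δ₀) := by
  have h (e : ℝ) : δ₀ - C * s ^ e ≤ δ₀ := sub_le_self _ (by positivity)
  exact ⟨le_rfl, h _, h _, h _⟩

/-- In the radial direction the relative speed is `2|ρ - ρ'| ≤ 4δ₀` up to an error of at most `δ₀`:
this is where the factor `5` in the radial width comes from. -/
lemma add_smul_decayRates_le_escapeWidthsDeriv (hC : 0 ≤ C) {N s d : ℝ} (hs : 0 ≤ s)
    (hNC : N = C * μ) (hN : N * s ^ (-(1 + μ)) ≤ δ₀) (hd : d ≤ 2 * δ₀) :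
    (2 * d, 0, 0, 0) + N • decayRates (1 + μ) s ≤ escapeWidthsDeriv μ δ₀ C s := by
  subst hNC
  refine ⟨?_, (zero_add _).le, (zero_add _).trans_le ?_, (zero_add _).le⟩
  · change 2 * d + C * μ * s ^ (-(1 + μ)) ≤ 5 * δ₀
    linarith
  · change C * μ * s ^ (-(1 + μ) - 1) ≤ C * (1 + μ) * s ^ (-(1 + μ) - 1)
    gcongr
    linarith

end Escape

theorem statement_15_general {m : ℕ} {μ : ℝ} (hμ : 0 < μ) {U : Set (Fin m → ℝ)} (hU : IsOpen U)
    {p : ℝ → (Fin m → ℝ) → ℝ → (Fin m → ℝ) → ℝ}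
    (hp : ∀ L ⊆ U, IsCompact L → ∀ B, ShortRangeOn p (1 + μ) (bddRegion L B))
    {χ : ℝ → ℝ} (hχ : IsCutoff χ) {K : Set (Fin m → ℝ)} (hK : IsCompact K) (hKU : K ⊆ U)
    {c₀ : ℝ} (hc₀ : 0 < c₀) (C₀ : ℝ) :
    ∃ δ' > (0 : ℝ), ∃ C > (0 : ℝ), ∀ δ₀ ∈ Ioo 0 δ', ∃ T₁ < (0 : ℝ), ∀ T₀ ≤ T₁,
      ∀ (rS : ℝ → ℝ) (θS : ℝ → Fin m → ℝ) (ρS : ℝ → ℝ) (ωS : ℝ → Fin m → ℝ),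
        IsHamSolOn p rS θS ρS ωS (Iic 0) →
        (∀ t ≤ 0, rS t ∈ Ioi 1 ∧ θS t ∈ K ∧ |ρS t| ≤ C₀ ∧ eNorm (ωS t) ≤ C₀ ∧
          c₀ * |t + T₀| ≤ rS t) →
        (∀ t ≤ 0, 0 < δ₀ - C * |t + T₀| ^ (-μ) ∧ 0 < δ₀ - C * |t + T₀| ^ (-(1 : ℝ) - μ) ∧
          (∀ r θ ρ ω, 0 ≤ escapeFn μ χ δ₀ C T₀ rS θS ρS ωS t r θ ρ ω) ∧
          escapeFn μ χ δ₀ C T₀ rS θS ρS ωS t (rS t) (θS t) (ρS t) (ωS t) = 1) ∧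
        ∀ t ≤ 0, ∀ r > 1, ∀ θ ρ ω,
          lagrangeDeriv p (escapeFn μ χ δ₀ C T₀ rS θS ρS ωS) t r θ ρ ω ≤ 0 := by
  obtain ⟨δ', hδ', N, hN, hmotion⟩ := exists_compNorm_hamField_sub_le_of_tube hU hp
    (by positivity) hK hKU hc₀ C₀
  refine ⟨δ', hδ', N / μ, by positivity, fun δ₀ hδ₀ => ?_⟩
  obtain ⟨S, hS⟩ := eventually_atTop.1
    (eventually_widthsPos_escapeWidths hμ hδ₀.1 (N / μ) N)
  refine ⟨-max S 1, by simp, fun T₀ hT₀ rS θS ρS ωS hsol htraj => ?_⟩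
  have hneg (t : ℝ) (ht : t ≤ 0) : t + T₀ < 0 := by linarith [le_max_right S 1]
  have hwidths (t : ℝ) (ht : t ≤ 0) := hS |t + T₀| (by
    rw [abs_of_neg (hneg t ht)]
    linarith [le_max_left S 1])
  simp only [escapeFn_eq_boxCutoff]
  refine ⟨fun t ht => ⟨(hwidths t ht).1.2.1, (hwidths t ht).1.2.2.1,
    fun r θ ρ ω => boxCutoff_nonneg hχ _ _, ?_⟩, fun t ht r hr θ ρ ω => ?_⟩
  · rw [sub_self, boxCutoff_zero hχ]
  · obtain ⟨hrt, hθt, hρt, hωt, hct⟩ := htraj t ht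
    have hregion : (rS t, θS t, ρS t, ωS t) ∈ bddRegion K C₀ :=
      ⟨hrt, hθt, mem_closedBall_zero_iff.2 hρt,
        mem_closedBall_zero_iff.2 ((norm_le_eNorm _).trans hωt)⟩
    refine lagrangeDeriv_boxCutoff_nonpos p hχ
      (γ := fun t => (rS t, θS t, ρS t, ωS t)) (z := (r, θ, ρ, ω))
      (hasDerivAt_escapeWidths_abs μ δ₀ (N / μ) (hneg t ht)) (hsol.hasDerivAt ht)
      (hwidths t ht).1 fun hbox => ?_
    have htube := hbox.trans (smul_le_smul_of_nonneg_left
      (escapeWidths_le (by positivity) (abs_nonneg _)) zero_le_two)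
    rw [neg_neg]
    exact (hmotion δ₀ hδ₀.2.le _ (abs_pos.2 (hneg t ht).ne) _ _ hr hregion hct htube).trans
      (add_smul_decayRates_le_escapeWidthsDeriv (by positivity) (abs_nonneg _)
        (div_mul_cancel₀ N hμ.ne').symm (hwidths t ht).2 htube.2.2.1)

/-- Lemma 3.5, parts 1 and 2: monotone escape function. The escape
function `φ` is well defined, nonnegative, equals `1` along the trajectory, and its
Lagrange derivative `(∂_t + H_p)φ` is nonpositive everywhere. -/
theorem statement_15 {m : ℕ} (hm : 1 ≤ m) {μ : ℝ} (hμ : μ ∈ Ioo (0:ℝ) 1)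
    {U : Set (Fin m → ℝ)} (hU : IsOpen U) (c : Coeffs m μ U)
    (χ : ℝ → ℝ) (hχs : ContDiff ℝ (⊤ : ℕ∞) χ)
    (hχ1 : ∀ τ ≤ (1:ℝ), χ τ = 1) (hχ0 : ∀ τ ≥ (2:ℝ), χ τ = 0)
    (hχrange : ∀ τ, χ τ ∈ Icc (0:ℝ) 1) (hχmono : ∀ τ ≥ (0:ℝ), deriv χ τ ≤ 0)
    (K : Set (Fin m → ℝ)) (hK : IsCompact K) (hKU : K ⊆ U)
    (c₀ C₀ ε₀ : ℝ) (hc₀ : 0 < c₀) (hC₀ : 0 < C₀) (hε₀ : 0 < ε₀) :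
    ∃ δ' > (0:ℝ), ∃ C > (0:ℝ), ∀ δ₀ ∈ Ioo (δ'/2) δ', ∃ T₁ < (0:ℝ), ∀ T₀ ≤ T₁,
      ∀ (rS : ℝ → ℝ) (θS : ℝ → Fin m → ℝ) (ρS : ℝ → ℝ) (ωS : ℝ → Fin m → ℝ),
        IsHamSolOn c.p rS θS ρS ωS (Iic 0) →
        (∀ t ≤ (0:ℝ), rS t ∈ Ioi (1:ℝ) ∧ θS t ∈ K ∧ |ρS t| ≤ C₀ ∧
          eNorm (ωS t) ≤ C₀ ∧ rS t ≥ c₀ * |t + T₀| ∧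
          ∀ y, y ∉ U → eNorm (θS t - y) ≥ ε₀) →
        -- (i) well-definedness, nonnegativity, and value 1 along the trajectory
        ((∀ t ≤ (0:ℝ),
          0 < δ₀ - C * |t + T₀| ^ (-μ) ∧
          0 < δ₀ - C * |t + T₀| ^ (-(1:ℝ) - μ) ∧
          (∀ (r : ℝ) (θ : Fin m → ℝ) (ρ : ℝ) (ω : Fin m → ℝ),
            0 ≤ escapeFn μ χ δ₀ C T₀ rS θS ρS ωS t r θ ρ ω) ∧
          escapeFn μ χ δ₀ C T₀ rS θS ρS ωS t (rS t) (θS t) (ρS t) (ωS t) = 1) ∧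
        -- (ii) nonpositivity of the Lagrange derivative
        (∀ t ≤ (0:ℝ), ∀ r ∈ Ioi (1:ℝ), ∀ θ ∈ U, ∀ (ρ : ℝ) (ω : Fin m → ℝ),
          deriv (fun s => escapeFn μ χ δ₀ C T₀ rS θS ρS ωS s r θ ρ ω) t
          + pdRho c.p r θ ρ ω *
              deriv (fun x => escapeFn μ χ δ₀ C T₀ rS θS ρS ωS t x θ ρ ω) r
          + (∑ j, pdOmega c.p j r θ ρ ω *
              fderiv ℝ (fun y => escapeFn μ χ δ₀ C T₀ rS θS ρS ωS t r y ρ ω) θ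
                (Pi.single j 1))
          - pdR c.p r θ ρ ω *
              deriv (fun x => escapeFn μ χ δ₀ C T₀ rS θS ρS ωS t r θ x ω) ρ
          - (∑ j, pdTheta c.p j r θ ρ ω *
              fderiv ℝ (fun y => escapeFn μ χ δ₀ C T₀ rS θS ρS ωS t r θ ρ y) ω
                (Pi.single j 1)) ≤ 0)) := by
  obtain ⟨δ', hδ', C, hC, h⟩ := statement_15_general hμ.1 hU
    (fun K hKU hK B => c.shortRangeOn hμ.2.le hU hK hKU B)
    (.of_deriv_nonpos (hχs.differentiable (by simp)) hχ1 hχ0 hχmono) hK hKU hc₀ C₀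
  refine ⟨δ', hδ', C, hC, fun δ₀ hδ₀ => ?_⟩
  obtain ⟨T₁, hT₁, h⟩ := h δ₀ ⟨(half_pos hδ').trans hδ₀.1, hδ₀.2⟩
  refine ⟨T₁, hT₁, fun T₀ hT₀ rS θS ρS ωS hsol htraj => ?_⟩
  obtain ⟨hi, hii⟩ := h T₀ hT₀ rS θS ρS ωS hsol fun t ht =>
    have ⟨hr, hθ, hρ, hω, hrt, _⟩ := htraj t ht
    ⟨hr, hθ, hρ, hω, hrt⟩
  exact ⟨hi, fun t ht r hr θ _ ρ ω => hii t ht r hr θ ρ ω⟩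

end Scattering
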